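/- arXiv:1206.3683 — 2 statements merged into one kernel-verified Lean document; each statement's English description precedes it below -/
import Mathlib

section
/- The real Clifford algebras Cl_{q+1,p-1} and Cl_{p,q} are isomorphic as ℝ-algebras whenever p ≥ 1. -/
/-- The quadratic form on `ℝ^(p+q)` with `p` entries `+1` and `q` entries `-1`,
whose Clifford algebra is the real Clifford algebra `Cl_{p,q}`. -/
noncomputable def Qpq (p q : ℕ) : QuadraticForm ℝ (Fin (p + q) → ℝ) :=
  QuadraticMap.weightedSumSquares ℝ (fun i : Fin (p + q) => if (i : ℕ) < p then (1 : ℝ) else -1)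

namespace CliffordAlgebra

open QuadraticMap

variable {R M : Type*} [CommRing R] [AddCommGroup M] [Module R M]

/-- The first basis vector `e` of `⟨1⟩ ⊥ Q` squares to one in the Clifford algebra. -/
theorem ι_sq_prod_one_zero_mul_self (Q : QuadraticForm R M) :
    ι ((sq (R := R)).prod Q) (1, 0) * ι ((sq (R := R)).prod Q) (1, 0) = 1 := by
  simp [ι_sq_scalar]

/-- The first basis vector of `⟨1⟩ ⊥ Q` anticommutes with the vectors of `Q`. -/
theorem ι_sq_prod_one_zero_mul_ι (Q : QuadraticForm R M) (m : M) :
    ι ((sq (R := R)).prod Q) (1, 0) * ι ((sq (R := R)).prod Q) (0, m) =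
      -(ι ((sq (R := R)).prod Q) (0, m) * ι ((sq (R := R)).prod Q) (1, 0)) :=
  eq_neg_of_add_eq_zero_left <| ι_mul_ι_add_swap_of_isOrtho <| IsOrtho.inl_inr 1 m

/-- The algebra map `Cl(⟨1⟩ ⊥ Q) → Cl(⟨1⟩ ⊥ Q')`, for `Q' = -Q`, that fixes the first basis
vector `e` and sends a vector `v` of `Q` to `v * e`. -/
def sqProdNegHom (Q Q' : QuadraticForm R M) (h : ∀ m, Q' m = -Q m) :
    CliffordAlgebra ((sq (R := R)).prod Q) →ₐ[R] CliffordAlgebra ((sq (R := R)).prod Q') :=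
  lift _ ⟨ι ((sq (R := R)).prod Q') ∘ₗ LinearMap.inl R R M ∘ₗ LinearMap.fst R R M +
      LinearMap.mulRight R (ι ((sq (R := R)).prod Q') (1, 0)) ∘ₗ
        ι ((sq (R := R)).prod Q') ∘ₗ LinearMap.inr R R M ∘ₗ LinearMap.snd R R M, by
    rintro ⟨r, m⟩
    have hr : ((r, 0) : R × M) = r • (1, 0) := by simp
    have hee := ι_sq_prod_one_zero_mul_self Q'
    have hev := ι_sq_prod_one_zero_mul_ι Q' m
    have hvv := ι_sq_scalar ((sq (R := R)).prod Q') (0, m)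
    simp only [prod_apply, sq_apply, mul_zero, zero_add, h, map_neg] at hvv
    simp only [LinearMap.add_apply, LinearMap.comp_apply, LinearMap.fst_apply,
      LinearMap.snd_apply, LinearMap.inl_apply, LinearMap.inr_apply, LinearMap.mulRight_apply,
      prod_apply, sq_apply, map_add, hr, map_smul]
    generalize ι ((sq (R := R)).prod Q') (1, 0) = e at *
    generalize ι ((sq (R := R)).prod Q') (0, m) = v at *
    have hcross : e * (v * e) = -v := by rw [← mul_assoc, hev, neg_mul, mul_assoc, hee, mul_one]
    have hcross' : v * e * e = v := by rw [mul_assoc, hee, mul_one]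
    have hsquare : v * e * (v * e) = algebraMap R _ (Q m) := by
      rw [mul_assoc, hcross, mul_neg, hvv, neg_neg]
    rw [add_mul, mul_add, mul_add, smul_mul_smul_comm, hee, smul_mul_assoc, hcross,
      mul_smul_comm, hcross', hsquare, Algebra.algebraMap_eq_smul_one (r * r)]
    simp⟩

theorem sqProdNegHom_ι (Q Q' : QuadraticForm R M) (h : ∀ m, Q' m = -Q m) (x : R × M) :
    sqProdNegHom Q Q' h (ι _ x) =
      ι _ (x.1, 0) + ι ((sq (R := R)).prod Q') (0, x.2) * ι _ (1, 0) := by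
  simp [sqProdNegHom]

theorem sqProdNegHom_comp_sqProdNegHom (Q Q' : QuadraticForm R M) (h : ∀ m, Q' m = -Q m)
    (h' : ∀ m, Q m = -Q' m) :
    (sqProdNegHom Q' Q h').comp (sqProdNegHom Q Q' h) = AlgHom.id R _ := by
  have hz (P : QuadraticForm R M) : ι ((sq (R := R)).prod P) (0, 0) = 0 := map_zero _
  ext : 2 <;> refine LinearMap.ext fun x => ?_
  · simp [sqProdNegHom_ι, hz]
  · simp [sqProdNegHom_ι, hz, mul_assoc]

/-- `Cl(⟨1⟩ ⊥ Q) ≅ Cl(⟨1⟩ ⊥ -Q)`. -/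
def sqProdNegEquiv (Q : QuadraticForm R M) :
    CliffordAlgebra ((sq (R := R)).prod Q) ≃ₐ[R] CliffordAlgebra ((sq (R := R)).prod (-Q)) :=
  AlgEquiv.ofAlgHom (sqProdNegHom Q (-Q) fun _ => rfl)
    (sqProdNegHom (-Q) Q fun _ => (neg_neg _).symm)
    (sqProdNegHom_comp_sqProdNegHom _ _ _ _) (sqProdNegHom_comp_sqProdNegHom _ _ _ _)

end CliffordAlgebra

/-- Splitting off the first positive coordinate of `Qpq (p + 1) q`. -/
theorem Qpq_succ_equivalent (p q : ℕ) :
    (Qpq (p + 1) q).Equivalent ((QuadraticMap.sq (R := ℝ)).prod (Qpq p q)) := by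
  have hpq : p + q + 1 = p + 1 + q := by omega
  refine ⟨⟨LinearEquiv.funCongrLeft ℝ ℝ (finCongr hpq) ≪≫ₗ
    (Fin.consLinearEquiv ℝ fun _ : Fin (p + q + 1) => ℝ).symm, fun x => ?_⟩⟩
  simp only [Qpq, QuadraticMap.prod_apply, QuadraticMap.weightedSumSquares_apply]
  rw [← (finCongr hpq).sum_comp, Fin.sum_univ_succ]
  simp [Fin.consLinearEquiv, LinearMap.funLeft, Fin.tail]

/-- Exchanging the positive and the negative coordinates negates the form. -/
theorem Qpq_swap_equivalent (p q : ℕ) : (Qpq q p).Equivalent (-Qpq p q) := by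
  refine ⟨⟨LinearEquiv.funCongrLeft ℝ ℝ finAddFlip, fun x => ?_⟩⟩
  simp only [Qpq, neg_apply, QuadraticMap.weightedSumSquares_apply]
  rw [Fin.sum_univ_add, Fin.sum_univ_add]
  simp [LinearMap.funLeft]

/-- `Cl_{q+1,p-1} ≅ Cl_{p,q}` as `ℝ`-algebras whenever `p ≥ 1`. -/
theorem clifford_iso_q1_p1 (p q : ℕ) (hp : 1 ≤ p) :
    Nonempty (CliffordAlgebra (Qpq (q + 1) (p - 1)) ≃ₐ[ℝ] CliffordAlgebra (Qpq p q)) := by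
  obtain ⟨p, rfl⟩ := Nat.exists_eq_add_of_le' hp
  obtain ⟨source⟩ := Qpq_succ_equivalent q p
  obtain ⟨swap⟩ := Qpq_swap_equivalent p q
  obtain ⟨target⟩ := Qpq_succ_equivalent p q
  exact ⟨(CliffordAlgebra.equivOfIsometry
      (source.trans ((QuadraticMap.IsometryEquiv.refl _).prod swap))).trans
    ((CliffordAlgebra.sqProdNegEquiv (Qpq p q)).symm.trans
      (CliffordAlgebra.equivOfIsometry target.symm))⟩
end

section
/- The real Clifford algebra Cl_{p,q+8} is isomorphic as an ℝ-algebra to the algebra of 16×16 matrices over Cl_{p,q}. -/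
open CliffordAlgebra QuadraticMap

namespace DiagonalClifford

section Family

variable {ι κ A : Type*} [Ring A] [Algebra ℝ A]

/-- The Clifford relations for a family of pairwise anticommuting elements with squares `w`. -/
structure IsCliffordFamily (w : ι → ℝ) (f : ι → A) : Prop where
  sq (i : ι) : f i * f i = algebraMap ℝ A (w i)
  anticomm (i j : ι) (hij : i ≠ j) : f i * f j = -(f j * f i)

theorem IsCliffordFamily.comp {w : ι → ℝ} {f : ι → A} (h : IsCliffordFamily w f)
    (e : κ → ι) (he : Function.Injective e) : IsCliffordFamily (w ∘ e) (f ∘ e) where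
  sq i := h.sq (e i)
  anticomm _ _ hij := h.anticomm _ _ (he.ne hij)

theorem polar_weightedSumSquares [Fintype ι] (w : ι → ℝ) (x y : ι → ℝ) :
    polar (weightedSumSquares ℝ w) x y = ∑ i, 2 * w i * (x i * y i) := by
  simp only [polar, weightedSumSquares_apply, ← Finset.sum_sub_distrib, Pi.add_apply, smul_eq_mul]
  exact Finset.sum_congr rfl fun i _ => by ring

variable [Fintype ι] [DecidableEq ι] [Fintype κ] [DecidableEq κ]

/-- The Clifford algebra of the diagonal quadratic form with coefficients `w`. -/
abbrev Cl (w : ι → ℝ) : Type _ := CliffordAlgebra (weightedSumSquares ℝ w)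

/-- The standard generators of `Cl w`. -/
noncomputable def gen (w : ι → ℝ) (i : ι) : Cl w := CliffordAlgebra.ι _ (Pi.single i 1)

theorem isCliffordFamily_gen (w : ι → ℝ) : IsCliffordFamily w (gen w) where
  sq i := by
    rw [gen, ι_sq_scalar, weightedSumSquares_apply,
      Finset.sum_eq_single i (fun j _ hj => by simp [hj]) (by simp)]
    simp
  anticomm i j hij := by
    rw [gen, gen, ι_mul_ι_comm, polar_weightedSumSquares, Finset.sum_eq_zero, map_zero, zero_sub]
    intro k _
    by_cases hk : k = i
    · subst hk; simp [hij]
    · simp [hk]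

theorem IsCliffordFamily.linearCombination_mul_self {w : ι → ℝ} {f : ι → A}
    (h : IsCliffordFamily w f) (x : ι → ℝ) :
    Fintype.linearCombination ℝ f x * Fintype.linearCombination ℝ f x =
      algebraMap ℝ A (weightedSumSquares ℝ w x) := by
  have h2 : IsUnit (2 : A) := by
    simpa only [map_ofNat] using (IsUnit.mk0 (2 : ℝ) two_ne_zero).map (algebraMap ℝ A)
  revert x
  rw [forall_mul_self_eq_iff h2]
  ext i j
  simp only [LinearMap.comp_apply, LinearMap.add_apply, LinearMap.compl₂_apply,
    LinearMap.mul_apply', LinearMap.flip_apply, LinearMap.compr₂_apply, polarBilin_apply_apply,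
    Algebra.linearMap_apply, LinearMap.single_apply, Fintype.linearCombination_apply_single,
    one_smul, polar_weightedSumSquares]
  by_cases hij : i = j
  · subst hij
    rw [h.sq, Finset.sum_eq_single i (fun j _ hj => by simp [hj]) (by simp), ← map_add]
    simp [two_mul]
  · rw [h.anticomm i j hij, neg_add_cancel, Finset.sum_eq_zero, map_zero]
    intro k _
    by_cases hk : k = i
    · subst hk; simp [hij]
    · simp [hk]

/-- The algebra map out of `Cl w` determined by a family satisfying the Clifford relations. -/
noncomputable def liftFamily {w : ι → ℝ} {f : ι → A} (h : IsCliffordFamily w f) : Cl w →ₐ[ℝ] A :=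
  CliffordAlgebra.lift _ ⟨Fintype.linearCombination ℝ f, h.linearCombination_mul_self⟩

@[simp]
theorem liftFamily_gen {w : ι → ℝ} {f : ι → A} (h : IsCliffordFamily w f) (i : ι) :
    liftFamily h (gen w i) = f i := by
  simp [liftFamily, gen]

theorem commute_of_commute_gen {w : ι → ℝ} (φ : Cl w →ₐ[ℝ] A) {c : A}
    (h : ∀ i, Commute (φ (gen w i)) c) (x : Cl w) : Commute (φ x) c := by
  induction x using CliffordAlgebra.induction with
  | algebraMap r => rw [AlgHom.commutes]; exact Algebra.commutes r c
  | ι m =>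
    have hm : CliffordAlgebra.ι (weightedSumSquares ℝ w) m = ∑ i, m i • gen w i := by
      conv_lhs => rw [pi_eq_sum_univ' m]
      simp [gen]
    rw [hm, map_sum]
    exact Commute.sum_left _ _ _ fun i _ => by simpa using (h i).smul_left (m i)
  | mul x y hx hy => rw [map_mul]; exact hx.mul_left hy
  | add x y hx hy => rw [map_add]; exact hx.add_left hy

theorem algHom_ext_gen {w : ι → ℝ} {φ ψ : Cl w →ₐ[ℝ] A}
    (h : ∀ i, φ (gen w i) = ψ (gen w i)) : φ = ψ := by
  apply CliffordAlgebra.hom_ext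
  ext i
  simpa [gen] using h i

/-- Relabelling the generators. -/
noncomputable def reindexEquiv {w : ι → ℝ} {v : κ → ℝ} (e : ι ≃ κ) (h : ∀ i, v (e i) = w i) :
    Cl w ≃ₐ[ℝ] Cl v :=
  have hw : w = v ∘ e := funext fun i => (h i).symm
  have hv : v = w ∘ e.symm := funext fun k => by simp [← h]
  AlgEquiv.ofAlgHom
    (liftFamily (f := gen v ∘ e) (hw ▸ (isCliffordFamily_gen v).comp e e.injective))
    (liftFamily (f := gen w ∘ e.symm) (hv ▸ (isCliffordFamily_gen w).comp e.symm e.symm.injective))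
    (algHom_ext_gen fun i => by simp)
    (algHom_ext_gen fun i => by simp)

end Family

section Volume

variable {ι A B : Type*} [Ring A] [Algebra ℝ A] [Ring B] [Algebra ℝ B]

/-- The product of the last four members of a family. -/
def vol (f : ι ⊕ Fin 4 → A) : A :=
  f (.inr 0) * (f (.inr 1) * (f (.inr 2) * f (.inr 3)))

theorem map_vol (φ : A →ₐ[ℝ] B) (f : ι ⊕ Fin 4 → A) : φ (vol f) = vol fun i => φ (f i) := by
  simp [vol]

/-- Multiply the last four members of a family by their product. -/
def twist (f : ι ⊕ Fin 4 → A) : ι ⊕ Fin 4 → A :=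
  Sum.elim (fun i => f (.inl i)) fun k => f (.inr k) * vol f

theorem commute_mul_of_anticomm {R : Type*} [Ring R] {x a b : R} (ha : x * a = -(a * x))
    (hb : x * b = -(b * x)) :
    Commute x (a * b) := by
  rw [Commute, SemiconjBy, ← mul_assoc, ha, neg_mul, mul_assoc, hb, mul_neg, neg_neg, mul_assoc]

variable {w : ι → ℝ} {s : ℝ} {f : ι ⊕ Fin 4 → A}

theorem commute_vol (h : IsCliffordFamily (Sum.elim w fun _ => s) f) (i : ι) :
    Commute (f (.inl i)) (vol f) := by
  have key (k : Fin 4) := h.anticomm (.inl i) (.inr k) (by simp)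
  rw [vol, ← mul_assoc]
  exact (commute_mul_of_anticomm (key 0) (key 1)).mul_right
    (commute_mul_of_anticomm (key 2) (key 3))

theorem mul_vol (h : IsCliffordFamily (Sum.elim w fun _ => s) f) (k : Fin 4) :
    vol f * f (.inr k) = -(f (.inr k) * vol f) := by
  have sq (i : Fin 4) : f (.inr i) * f (.inr i) = s • 1 := by
    simpa [Algebra.algebraMap_eq_smul_one] using h.sq (.inr i)
  have sq' (i : Fin 4) (x : A) : f (.inr i) * (f (.inr i) * x) = s • x := by
    rw [← mul_assoc, sq, smul_mul_assoc, one_mul]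
  have ac (i j : Fin 4) (hij : i < j) : f (.inr j) * f (.inr i) = -(f (.inr i) * f (.inr j)) :=
    h.anticomm _ _ (by simpa using hij.ne')
  have ac' (i j : Fin 4) (hij : i < j) (x : A) :
      f (.inr j) * (f (.inr i) * x) = -(f (.inr i) * (f (.inr j) * x)) := by
    rw [← mul_assoc, ac i j hij, neg_mul, mul_assoc]
  have c01 := ac' 0 1 (by decide)
  have c02 := ac' 0 2 (by decide)
  have c03 := ac' 0 3 (by decide)
  have c12 := ac' 1 2 (by decide)
  have c13 := ac' 1 3 (by decide)
  have c23 := ac' 2 3 (by decide)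
  have d03 := ac 0 3 (by decide)
  have d13 := ac 1 3 (by decide)
  have d23 := ac 2 3 (by decide)
  fin_cases k <;>
    simp [vol, mul_assoc, sq, sq', c01, c02, c03, c12, c13, c23, d03, d13, d23]

theorem vol_mul_self (h : IsCliffordFamily (Sum.elim w fun _ => s) f) (hs : s * s = 1) :
    vol f * vol f = 1 := by
  have sq (i : Fin 4) : f (.inr i) * f (.inr i) = s • 1 := by
    simpa [Algebra.algebraMap_eq_smul_one] using h.sq (.inr i)
  have ac (i j : Fin 4) (hij : i < j) (x : A) :
      f (.inr j) * (f (.inr i) * x) = -(f (.inr i) * (f (.inr j) * x)) := by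
    rw [← mul_assoc, h.anticomm _ _ (by simpa using hij.ne'), neg_mul, mul_assoc]
  have c01 := ac 0 1 (by decide)
  have c02 := ac 0 2 (by decide)
  have c03 := ac 0 3 (by decide)
  have c12 := ac 1 2 (by decide)
  have c13 := ac 1 3 (by decide)
  have c23 := ac 2 3 (by decide)
  simp [vol, mul_assoc, sq, c01, c02, c03, c12, c13, c23, smul_smul, hs]

theorem twist_mul_twist (h : IsCliffordFamily (Sum.elim w fun _ => s) f) (hs : s * s = 1)
    (k l : Fin 4) : twist f (.inr k) * twist f (.inr l) = -(f (.inr k) * f (.inr l)) := by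
  simp only [twist, Sum.elim_inr]
  rw [mul_assoc, ← mul_assoc (vol f), mul_vol h, neg_mul, mul_assoc, vol_mul_self h hs, mul_one,
    mul_neg]

theorem isCliffordFamily_twist (h : IsCliffordFamily (Sum.elim w fun _ => s) f) (hs : s * s = 1) :
    IsCliffordFamily (Sum.elim w fun _ => -s) (twist f) where
  sq := by
    rintro (i | k)
    · exact h.sq (.inl i)
    · rw [twist_mul_twist h hs, h.sq]
      simp
  anticomm := by
    rintro (i | k) (j | l) hij
    · exact h.anticomm _ _ (by simpa using hij)
    · simp only [twist, Sum.elim_inl, Sum.elim_inr]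
      rw [← mul_assoc, h.anticomm _ _ hij, mul_assoc, ← (commute_vol h i).eq, neg_mul, mul_assoc]
    · simp only [twist, Sum.elim_inl, Sum.elim_inr]
      rw [← mul_assoc, mul_assoc, ← (commute_vol h j).eq, ← mul_assoc, h.anticomm _ _ hij, neg_mul]
    · rw [twist_mul_twist h hs, twist_mul_twist h hs, h.anticomm _ _ (by simpa using hij)]

theorem vol_twist (h : IsCliffordFamily (Sum.elim w fun _ => s) f) (hs : s * s = 1) :
    vol (twist f) = vol f := by
  rw [vol, ← mul_assoc, twist_mul_twist h hs, twist_mul_twist h hs, neg_mul_neg, mul_assoc, vol]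

theorem twist_twist (h : IsCliffordFamily (Sum.elim w fun _ => s) f) (hs : s * s = 1) :
    twist (twist f) = f := by
  ext (i | k)
  · rfl
  · rw [twist, Sum.elim_inr, vol_twist h hs, twist, Sum.elim_inr, mul_assoc, vol_mul_self h hs,
      mul_one]

theorem map_twist (φ : A →ₐ[ℝ] B) (f : ι ⊕ Fin 4 → A) (i : ι ⊕ Fin 4) :
    φ (twist f i) = twist (fun j => φ (f j)) i := by
  rcases i with i | k
  · rfl
  · simp [twist, map_vol]

/-- The signs of four generators with equal squares `±1` can be reversed simultaneously. -/
noncomputable def flipFourEquiv [Fintype ι] [DecidableEq ι] (w : ι → ℝ) {s t : ℝ} (hs : s * s = 1)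
    (ht : t = -s) :
    Cl (Sum.elim w fun _ : Fin 4 => s) ≃ₐ[ℝ] Cl (Sum.elim w fun _ : Fin 4 => t) :=
  have hst : s = -t := by rw [ht, neg_neg]
  have ht' : t * t = 1 := by rw [ht, neg_mul_neg, hs]
  have hS := isCliffordFamily_gen (Sum.elim w fun _ : Fin 4 => s)
  have hT := isCliffordFamily_gen (Sum.elim w fun _ : Fin 4 => t)
  AlgEquiv.ofAlgHom
    (liftFamily (f := twist (gen _)) (by rw [hst]; exact isCliffordFamily_twist hT ht'))
    (liftFamily (f := twist (gen _)) (by rw [ht]; exact isCliffordFamily_twist hS hs))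
    (algHom_ext_gen fun i => by
      simp only [AlgHom.comp_apply, liftFamily_gen, map_twist, AlgHom.id_apply]
      exact congrFun (twist_twist hT ht') i)
    (algHom_ext_gen fun i => by
      simp only [AlgHom.comp_apply, liftFamily_gen, map_twist, AlgHom.id_apply]
      exact congrFun (twist_twist hS hs) i)

end Volume

section MatrixUnits

variable {n A B : Type*} [Fintype n] [DecidableEq n] [Ring A] [Algebra ℝ A] [Ring B] [Algebra ℝ B]

/-- The algebra map from matrices determined by a map on coefficients and a system of matrix units
commuting with its image. -/
def matrixLift (φ : A →ₐ[ℝ] B) (E : n → n → B) (hone : ∑ i, E i i = 1)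
    (hmul : ∀ i j k l, E i j * E k l = if j = k then E i l else 0)
    (hcomm : ∀ a i j, Commute (φ a) (E i j)) : Matrix n n A →ₐ[ℝ] B :=
  AlgHom.ofLinearMap
    { toFun := fun X => ∑ i, ∑ j, φ (X i j) * E i j
      map_add' := fun X Y => by simp [add_mul, Finset.sum_add_distrib]
      map_smul' := fun c X => by simp [Finset.smul_sum] }
    (by simp [Matrix.one_apply, apply_ite φ, ite_mul, hone])
    (fun X Y => by
      have key (i j k l : n) : φ (X i j) * E i j * (φ (Y k l) * E k l) =
          if j = k then φ (X i j) * φ (Y k l) * E i l else 0 := by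
        rw [mul_assoc, ← mul_assoc (E i j), ← (hcomm _ _ _).eq, mul_assoc, hmul, ← mul_assoc]
        split_ifs <;> simp
      simp only [LinearMap.coe_mk, AddHom.coe_mk, Matrix.mul_apply, map_sum, map_mul,
        Finset.sum_mul, Finset.mul_sum, key]
      simp only [Finset.sum_ite_eq', Finset.mem_univ, if_true]
      rw [Finset.sum_comm_cycle]
      exact Finset.sum_congr rfl fun _ _ => Finset.sum_comm)

end MatrixUnits

section Hyperbolic

variable {ι : Type*} {A : Type*} [Ring A] [Algebra ℝ A]

/-- The matrix units built from anticommuting `a`, `b` with `a * a = 1` and `b * b = -1`. -/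
noncomputable def unit (a b : A) : Fin 2 → Fin 2 → A :=
  ![![(1 / 2 : ℝ) • (1 - a * b), (1 / 2 : ℝ) • (a + b)],
    ![(1 / 2 : ℝ) • (a - b), (1 / 2 : ℝ) • (1 + a * b)]]

theorem sum_unit (a b : A) : ∑ i, unit a b i i = 1 := by
  simp only [unit, Fin.sum_univ_two, Matrix.cons_val_zero, Matrix.cons_val_one]
  module

theorem unit_mul_unit {a b : A} (ha : a * a = 1) (hb : b * b = -1) (hab : a * b = -(b * a))
    (i j k l : Fin 2) :
    unit a b i j * unit a b k l = if j = k then unit a b i l else 0 := by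
  have hba : b * a = -(a * b) := by rw [hab, neg_neg]
  have ha' (x : A) : a * (a * x) = x := by rw [← mul_assoc, ha, one_mul]
  have hba' (x : A) : b * (a * x) = -(a * (b * x)) := by
    rw [← mul_assoc, hba, neg_mul, mul_assoc]
  fin_cases i <;> fin_cases j <;> fin_cases k <;> fin_cases l <;>
    simp [unit, mul_add, add_mul, mul_sub, sub_mul, mul_assoc, ha, hb, hba, ha', hba'] <;>
    module

theorem commute_unit {x a b : A} (ha : Commute x a) (hb : Commute x b) (i j : Fin 2) :
    Commute x (unit a b i j) := by
  fin_cases i <;> fin_cases j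
  · exact ((Commute.one_right x).sub_right (ha.mul_right hb)).smul_right _
  · exact (ha.add_right hb).smul_right _
  · exact (ha.sub_right hb).smul_right _
  · exact ((Commute.one_right x).add_right (ha.mul_right hb)).smul_right _

/-- The weights `w` extended by a hyperbolic plane. -/
def hyp (w : ι → ℝ) : ι ⊕ (Fin 1 ⊕ Fin 1) → ℝ := Sum.elim w (Sum.elim (fun _ => 1) fun _ => -1)

/-- The `2 × 2` matrices that represent the generators of `Cl (hyp w)`. -/
def hypMatrix (f : ι → A) : ι ⊕ (Fin 1 ⊕ Fin 1) → Matrix (Fin 2) (Fin 2) A :=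
  Sum.elim (fun i => !![f i, 0; 0, -f i])
    (Sum.elim (fun _ => !![0, 1; 1, 0]) fun _ => !![0, 1; -1, 0])

theorem isCliffordFamily_hypMatrix {w : ι → ℝ} {f : ι → A} (h : IsCliffordFamily w f) :
    IsCliffordFamily (hyp w) (hypMatrix f) where
  sq := by
    rintro (i | i | i) <;> ext j k <;> fin_cases j <;> fin_cases k <;>
      simp [hyp, hypMatrix, h.sq, Matrix.algebraMap_matrix_apply]
  anticomm := by
    rintro (i | i | i) (j | j | j) hij
    · have := h.anticomm i j (by simpa using hij)
      simp [hypMatrix, this]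
    all_goals first
      | exact absurd (congrArg _ (congrArg _ (Subsingleton.elim i j))) hij
      | simp [hypMatrix]

/-- The elements of an algebra with Clifford generators `g` for `hyp w` that correspond to the
scalar matrices. -/
def hypScalar (g : ι ⊕ (Fin 1 ⊕ Fin 1) → A) (i : ι) : A :=
  g (.inr (.inr 0)) * (g (.inr (.inl 0)) * g (.inl i))

variable {w : ι → ℝ} {g : ι ⊕ (Fin 1 ⊕ Fin 1) → A}

theorem hyp_sq_inl (h : IsCliffordFamily (hyp w) g) :
    g (.inr (.inl 0)) * g (.inr (.inl 0)) = 1 := by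
  simpa [hyp] using h.sq (.inr (.inl 0))

theorem hyp_sq_inr (h : IsCliffordFamily (hyp w) g) :
    g (.inr (.inr 0)) * g (.inr (.inr 0)) = -1 := by
  simpa [hyp] using h.sq (.inr (.inr 0))

theorem commute_hypScalar (h : IsCliffordFamily (hyp w) g) (i : ι) (k : Fin 1 ⊕ Fin 1) :
    Commute (hypScalar g i) (g (.inr k)) := by
  have ha := hyp_sq_inl h
  have hab := h.anticomm (.inr (.inl 0)) (.inr (.inr 0)) (by simp)
  have hia := h.anticomm (.inl i) (.inr (.inl 0)) (by simp)
  have hib := h.anticomm (.inl i) (.inr (.inr 0)) (by simp)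
  have ha' (x : A) : g (.inr (.inl 0)) * (g (.inr (.inl 0)) * x) = x := by
    rw [← mul_assoc, ha, one_mul]
  have hab' (x : A) : g (.inr (.inl 0)) * (g (.inr (.inr 0)) * x) =
      -(g (.inr (.inr 0)) * (g (.inr (.inl 0)) * x)) := by
    rw [← mul_assoc, hab, neg_mul, mul_assoc]
  rw [Commute, SemiconjBy, hypScalar]
  rcases k with k | k <;> rw [Subsingleton.elim k 0] <;>
    simp [mul_assoc, ha', hab', hia, hib]

theorem hypScalar_mul_hypScalar (h : IsCliffordFamily (hyp w) g) (i j : ι) :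
    hypScalar g i * hypScalar g j = g (.inl i) * g (.inl j) := by
  have ha := hyp_sq_inl h
  have hb := hyp_sq_inr h
  have hab := h.anticomm (.inr (.inl 0)) (.inr (.inr 0)) (by simp)
  have hu : Commute (g (.inl i)) (g (.inr (.inr 0)) * g (.inr (.inl 0))) :=
    commute_mul_of_anticomm (h.anticomm _ _ (by simp)) (h.anticomm _ _ (by simp))
  have hu' : g (.inr (.inr 0)) * g (.inr (.inl 0)) * (g (.inr (.inr 0)) * g (.inr (.inl 0))) =
      1 := by
    rw [mul_assoc, ← mul_assoc (g (.inr (.inl 0))), hab, neg_mul, mul_assoc, ha, mul_one, mul_neg,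
      hb, neg_neg]
  rw [hypScalar, hypScalar, ← mul_assoc (g (.inr (.inr 0))) _ (g (.inl j)),
    ← mul_assoc (g (.inr (.inr 0))) _ (g (.inl i)), ← hu.eq, mul_assoc,
    ← mul_assoc (_ * _) (_ * _), hu', one_mul]

theorem hypScalar_mul (h : IsCliffordFamily (hyp w) g) (i : ι) :
    hypScalar g i * (g (.inr (.inl 0)) * g (.inr (.inr 0))) = -g (.inl i) := by
  have hi : Commute (g (.inl i)) (g (.inr (.inl 0)) * g (.inr (.inr 0))) :=
    commute_mul_of_anticomm (h.anticomm _ _ (by simp)) (h.anticomm _ _ (by simp))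
  rw [hypScalar, mul_assoc, mul_assoc, hi.eq, mul_assoc (g (.inr (.inl 0))),
    ← mul_assoc (g (.inr (.inl 0))) (g (.inr (.inl 0))), hyp_sq_inl h, one_mul, ← mul_assoc,
    hyp_sq_inr h, neg_one_mul]

theorem isCliffordFamily_hypScalar (h : IsCliffordFamily (hyp w) g) :
    IsCliffordFamily w (hypScalar g) where
  sq i := by rw [hypScalar_mul_hypScalar h, h.sq, hyp, Sum.elim_inl]
  anticomm i j hij := by
    rw [hypScalar_mul_hypScalar h, hypScalar_mul_hypScalar h, h.anticomm _ _ (by simpa using hij)]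

variable [Fintype ι] [DecidableEq ι]

/-- The map `Cl (hyp w) → M₂(Cl w)` given by the representing matrices. -/
noncomputable def toMatrix (w : ι → ℝ) : Cl (hyp w) →ₐ[ℝ] Matrix (Fin 2) (Fin 2) (Cl w) :=
  liftFamily (isCliffordFamily_hypMatrix (isCliffordFamily_gen w))

/-- The copy of `Cl w` inside `Cl (hyp w)` that corresponds to the scalar matrices. -/
noncomputable def scalarHom (w : ι → ℝ) : Cl w →ₐ[ℝ] Cl (hyp w) :=
  liftFamily (isCliffordFamily_hypScalar (isCliffordFamily_gen (hyp w)))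

/-- The matrix units of `Cl (hyp w)`. -/
noncomputable def hypUnit (w : ι → ℝ) : Fin 2 → Fin 2 → Cl (hyp w) :=
  unit (gen (hyp w) (.inr (.inl 0))) (gen (hyp w) (.inr (.inr 0)))

/-- The inverse of `toMatrix`. -/
noncomputable def ofMatrix (w : ι → ℝ) : Matrix (Fin 2) (Fin 2) (Cl w) →ₐ[ℝ] Cl (hyp w) :=
  have h := isCliffordFamily_gen (hyp w)
  matrixLift (scalarHom w) (hypUnit w) (sum_unit _ _)
    (unit_mul_unit (hyp_sq_inl h) (hyp_sq_inr h) (h.anticomm _ _ (by simp)))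
    fun x i j => commute_of_commute_gen _ (fun k => commute_unit
      (by simpa [scalarHom] using commute_hypScalar h k (.inl 0))
      (by simpa [scalarHom] using commute_hypScalar h k (.inr 0)) i j) x

theorem ofMatrix_apply (w : ι → ℝ) (X : Matrix (Fin 2) (Fin 2) (Cl w)) :
    ofMatrix w X = ∑ i, ∑ j, scalarHom w (X i j) * hypUnit w i j := rfl

theorem toMatrix_scalarHom (w : ι → ℝ) (x : Cl w) :
    toMatrix w (scalarHom w x) = Matrix.scalar (Fin 2) x := by
  suffices h : (toMatrix w).comp (scalarHom w) = Matrix.scalarAlgHom (Fin 2) ℝ from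
    DFunLike.congr_fun h x
  refine algHom_ext_gen fun i => ?_
  ext j k
  fin_cases j <;> fin_cases k <;> simp [toMatrix, scalarHom, hypScalar, hypMatrix]

theorem toMatrix_hypUnit (w : ι → ℝ) (i j : Fin 2) :
    toMatrix w (hypUnit w i j) = Matrix.single i j 1 := by
  ext k l
  fin_cases i <;> fin_cases j <;> fin_cases k <;> fin_cases l <;>
    simp [toMatrix, hypUnit, unit, hypMatrix] <;>
    module

/-- Adding a hyperbolic plane replaces a Clifford algebra by the `2 × 2` matrices over it. -/
noncomputable def hypEquiv (w : ι → ℝ) : Cl (hyp w) ≃ₐ[ℝ] Matrix (Fin 2) (Fin 2) (Cl w) :=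
  AlgEquiv.ofAlgHom (toMatrix w) (ofMatrix w)
    (by
      ext X : 1
      simp only [AlgHom.comp_apply, ofMatrix_apply, map_sum, map_mul,
        toMatrix_scalarHom, toMatrix_hypUnit, AlgHom.id_apply]
      ext i j
      fin_cases i <;> fin_cases j <;> simp)
    (algHom_ext_gen fun i => by
      rw [AlgHom.comp_apply, ofMatrix_apply, toMatrix, liftFamily_gen]
      rcases i with i | i | i
      · have key := hypScalar_mul (isCliffordFamily_gen (hyp w)) i
        simp [hypMatrix, scalarHom, hypUnit, unit, mul_sub, mul_add, key]
        module
      · rw [Subsingleton.elim i 0]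
        simp [hypMatrix, hypUnit, unit]
        module
      · rw [Subsingleton.elim i 0]
        simp [hypMatrix, hypUnit, unit]
        module)

end Hyperbolic

section Signature

/-- The coefficients of the diagonal form of signature `(p, q)`. -/
def sig (p q : ℕ) : Fin p ⊕ Fin q → ℝ := Sum.elim (fun _ => 1) fun _ => -1

/-- `Cl_{p,q}` with the positive and the negative generators indexed separately. -/
noncomputable def qpqEquiv (p q : ℕ) : CliffordAlgebra (Qpq p q) ≃ₐ[ℝ] Cl (sig p q) :=
  reindexEquiv finSumFinEquiv.symm fun i => by
    refine Fin.addCases (fun i => ?_) (fun i => ?_) i <;> simp [sig]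

/-- `Cl_{p,q+4} ≃ Cl_{p+4,q}`. -/
noncomputable def sigFlipEquiv (p q : ℕ) : Cl (sig p (q + 4)) ≃ₐ[ℝ] Cl (sig (p + 4) q) :=
  (reindexEquiv (v := Sum.elim (sig p q) fun _ : Fin 4 => -1)
    (((Equiv.refl _).sumCongr finSumFinEquiv.symm).trans (Equiv.sumAssoc _ _ _).symm)
    (by
      rintro (i | i)
      · simp [sig]
      · refine Fin.addCases (fun i => ?_) (fun i => ?_) i <;> simp [sig])).trans <|
  (flipFourEquiv (sig p q) (s := -1) (t := 1) (by norm_num) (by norm_num)).trans <|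
  (reindexEquiv
    ((finSumFinEquiv.symm.sumCongr (Equiv.refl _)).trans <| (Equiv.sumAssoc _ _ _).trans <|
      ((Equiv.refl _).sumCongr (Equiv.sumComm _ _)).trans (Equiv.sumAssoc _ _ _).symm)
    (by
      rintro (i | i)
      · refine Fin.addCases (fun i => ?_) (fun i => ?_) i <;> simp [sig]
      · simp [sig])).symm

/-- `Cl_{p+1,q+1} ≃ M₂(Cl_{p,q})`. -/
noncomputable def sigHypEquiv (p q : ℕ) :
    Cl (sig (p + 1) (q + 1)) ≃ₐ[ℝ] Matrix (Fin 2) (Fin 2) (Cl (sig p q)) :=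
  (reindexEquiv
    ((finSumFinEquiv.symm.sumCongr finSumFinEquiv.symm).trans (Equiv.sumSumSumComm _ _ _ _))
    (by
      rintro (i | i) <;> refine Fin.addCases (fun i => ?_) (fun i => ?_) i <;>
        simp [sig, hyp])).trans (hypEquiv (sig p q))

/-- If `Cl_{p,q}` is a matrix algebra over `C`, so is `Cl_{p+1,q+1}`, with twice the size. -/
noncomputable def sigHypMatrixEquiv {C : Type*} [Ring C] [Algebra ℝ C] {p q m : ℕ}
    (e : Cl (sig p q) ≃ₐ[ℝ] Matrix (Fin m) (Fin m) C) :
    Cl (sig (p + 1) (q + 1)) ≃ₐ[ℝ] Matrix (Fin (2 * m)) (Fin (2 * m)) C :=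
  (sigHypEquiv p q).trans <| e.mapMatrix.trans <| (Matrix.compAlgEquiv _ _ _ ℝ).trans <|
    Matrix.reindexAlgEquiv ℝ _ finProdFinEquiv

/-- `Cl_{p+4,q+4} ≃ M₁₆(Cl_{p,q})`. -/
noncomputable def sigHypFourEquiv (p q : ℕ) :
    Cl (sig (p + 4) (q + 4)) ≃ₐ[ℝ] Matrix (Fin 16) (Fin 16) (Cl (sig p q)) :=
  sigHypMatrixEquiv <| sigHypMatrixEquiv <| sigHypMatrixEquiv <| sigHypEquiv p q

end Signature

end DiagonalClifford

open DiagonalClifford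

/-- `Cl_{p,q+8}` is isomorphic as an `ℝ`-algebra to `16×16` matrices over `Cl_{p,q}`. -/
theorem clifford_iso_q8 (p q : ℕ) :
    Nonempty (CliffordAlgebra (Qpq p (q + 8)) ≃ₐ[ℝ]
        Matrix (Fin 16) (Fin 16) (CliffordAlgebra (Qpq p q))) := by
  exact ⟨(qpqEquiv p (q + 8)).trans <| (sigFlipEquiv p (q + 4)).trans <|
    (sigHypFourEquiv p q).trans (qpqEquiv p q).symm.mapMatrix⟩
end
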